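/- Proposition 2 (TDMA, finite peak power). Consider Problem (P1') with peak power P_peak > 0. Let (α₀, α₁, …, α_K, s₀, …, s_K, m₁, …, m_K) be any feasible point with 0 < α₀ < 1 and 0 < s₀ < α₀ P_peak (i.e., WPT power p₀ = s₀/α₀ strictly below P_peak). Set α̃₀ = s₀/P_peak and t = (1 − α̃₀)/(1 − α₀) ≥ 1. Then the point (α̃₀, t α₁, …, t α_K, s₀, …, s_K, m₁, …, m_K) is feasible, satisfies s₀ = α̃₀ P_peak (i.e., WPT power equal to P_peak), and its sum-rate is greater than or equal to the sum-rate of the original point. Hence the maximum sum-rate of Problem (P1') is achieved with p₀* = P_peak. -/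

import Mathlib

open Finset

/-- Per-pair decode-and-forward rate in Problem (P1') (TDMA, energy variables):
time fraction `a`, source transmit energy `mk` (first-hop gain `h1k`), relay transmit
energy `sk` (second-hop gain `h2k`), noise power `σ²`; the rate is `0` when `a = 0`. -/
noncomputable def tdmaRate (σ a mk h1k sk h2k : ℝ) : ℝ :=
  if a = 0 then 0
  else (a / 2) * min (Real.logb 2 (1 + 2 * mk * h1k / (a * σ ^ 2)))
                     (Real.logb 2 (1 + 2 * sk * h2k / (a * σ ^ 2)))

lemma logb_scale_aux (t x : ℝ) (ht : 1 ≤ t) (hx : 0 ≤ x) :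
    Real.logb 2 (1 + x) ≤ t * Real.logb 2 (1 + x / t) := by
  have ht0 : 0 < t := by linarith
  have hxt : 0 ≤ x / t := by positivity
  have h := one_add_mul_self_le_rpow_one_add (s := x / t) (by linarith) ht
  rw [mul_div_cancel₀ x ht0.ne'] at h
  rw [← Real.logb_rpow_eq_mul_logb_of_pos (by linarith)]
  exact Real.logb_le_logb_of_le (by norm_num) (by linarith) h

lemma tdmaRate_scale_aux (σ a mk h1k sk h2k t : ℝ) (hσ : 0 < σ) (ha : 0 ≤ a) (ht : 1 ≤ t)
    (hm : 0 ≤ mk) (hh1 : 0 < h1k) (hs : 0 ≤ sk) (hh2 : 0 < h2k) :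
    tdmaRate σ a mk h1k sk h2k ≤ tdmaRate σ (t * a) mk h1k sk h2k := by
  have ht0 : 0 < t := by linarith
  unfold tdmaRate
  rcases ha.eq_or_lt with rfl | ha
  · simp
  rw [if_neg ha.ne', if_neg (by positivity)]
  have key : ∀ e h : ℝ, 0 ≤ e → 0 < h → Real.logb 2 (1 + 2 * e * h / (a * σ ^ 2)) ≤
      t * Real.logb 2 (1 + 2 * e * h / (t * a * σ ^ 2)) := by
    intro e h he hh
    have := logb_scale_aux t (2 * e * h / (a * σ ^ 2)) ht (by positivity)
    rwa [div_div, show a * σ ^ 2 * t = t * a * σ ^ 2 by ring] at this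
  rw [show t * a / 2 = a / 2 * t by ring, mul_assoc (a / 2) t, mul_min_of_nonneg _ _ ht0.le]
  exact mul_le_mul_of_nonneg_left (min_le_min (key _ _ hm hh1) (key _ _ hs hh2)) (by positivity)

/-- Proposition 2 (TDMA, finite peak power).  For any feasible point of Problem (P1') with
peak power `P_peak` such that `0 < α₀ < 1` and `0 < s₀ < α₀ P_peak`, setting
`α̃₀ = s₀/P_peak` and `t = (1 − α̃₀)/(1 − α₀) ≥ 1`, the point
`(α̃₀, t α₁, …, t α_K, s, m)` is feasible, uses WPT power exactly `P_peak`
(i.e. `s₀ = α̃₀ P_peak`), and its sum-rate is at least the original one; hence the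
maximum sum-rate is achieved with `p₀* = P_peak`. -/
theorem stmt_11
    (K : ℕ) (hK : 1 ≤ K) (σ η P Ppeak : ℝ) (hσ : 0 < σ) (hη0 : 0 < η) (hη1 : η < 1)
    (hP : 0 < P) (hPpeak : 0 < Ppeak)
    (gr : Fin K → ℝ) (hgr : ∀ k, 0 < gr k)
    (g : Fin K → Fin K → ℝ) (hg : ∀ i k, 0 ≤ g i k)
    (h1 h2 : Fin K → ℝ) (hh1 : ∀ k, 0 < h1 k) (hh2 : ∀ k, 0 < h2 k)
    (Ec : Fin K → ℝ) (hEc : ∀ k, 0 ≤ Ec k)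
    -- a feasible point of Problem (P1') with peak power constraints
    (α₀ : ℝ) (α : Fin K → ℝ) (s₀ : ℝ) (s m : Fin K → ℝ)
    (hα₀pos : 0 < α₀) (hα₀lt1 : α₀ < 1)
    (hαnn : ∀ k, 0 ≤ α k) (htime : α₀ + ∑ k, α k ≤ 1)
    (hs₀pos : 0 < s₀) (hs : ∀ k, 0 ≤ s k) (henergy : s₀ + ∑ k, s k ≤ P)
    (hs₀peak : s₀ < α₀ * Ppeak) (hspeak : ∀ k, s k ≤ (α k / 2) * Ppeak)
    (hm : ∀ k, 0 ≤ m k)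
    (hcaus : ∀ k, m k + Ec k ≤
      η * ((s₀ + ∑ i ∈ univ.filter (fun i => i < k), s i) * gr k
            + ∑ i ∈ univ.filter (fun i => i < k), m i * g i k)) :
    let α₀' : ℝ := s₀ / Ppeak
    let t : ℝ := (1 - α₀') / (1 - α₀)
    -- `t ≥ 1`, the new point uses full peak power for WPT, and is feasible
    1 ≤ t ∧ 0 < α₀' ∧ s₀ = α₀' * Ppeak ∧
    (∀ k, 0 ≤ t * α k) ∧ α₀' + ∑ k, t * α k ≤ 1 ∧
    (∀ k, s k ≤ (t * α k / 2) * Ppeak) ∧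
    -- the sum-rate does not decrease
    (∑ k, tdmaRate σ (α k) (m k) (h1 k) (s k) (h2 k)) ≤
      ∑ k, tdmaRate σ (t * α k) (m k) (h1 k) (s k) (h2 k) := by
  intro α₀' t
  have h1a : 0 < 1 - α₀ := by linarith
  have hlt : α₀' < α₀ := (div_lt_iff₀ hPpeak).2 hs₀peak
  have ht : 1 ≤ t := (one_le_div h1a).2 (by linarith)
  have ht0 : 0 < t := by linarith
  have hts : t * (1 - α₀) = 1 - α₀' := div_mul_cancel₀ _ h1a.ne'
  refine ⟨ht, div_pos hs₀pos hPpeak, (div_mul_cancel₀ _ hPpeak.ne').symm,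
    fun k => mul_nonneg ht0.le (hαnn k), ?_, ?_, ?_⟩
  · rw [← Finset.mul_sum]
    have := mul_le_mul_of_nonneg_left (show ∑ k, α k ≤ 1 - α₀ by linarith) ht0.le
    linarith
  · intro k
    refine (hspeak k).trans (mul_le_mul_of_nonneg_right ?_ hPpeak.le)
    have := le_mul_of_one_le_left (hαnn k) ht
    linarith
  · exact Finset.sum_le_sum fun k _ => tdmaRate_scale_aux _ _ _ _ _ _ _ hσ (hαnn k) ht
      (hm k) (hh1 k) (hs k) (hh2 k)
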